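/- Let E be a measurable space and φ: E × [0,∞) → E a flow with φ(x,0) = x and the semigroup property, such that for every fixed t ≥ 0 the map x ↦ φ(x,t) is measurable. Let w: E → ℝ be measurable and absolutely continuous along the flow, i.e., for every x ∈ E there exists a function g_x: [0,∞) → ℝ, Lebesgue integrable on every bounded interval, with w(φ(x,t)) − w(x) = ∫₀ᵗ g_x(s) ds for all t ≥ 0. Then there exists a measurable function χ: E → ℝ such that for every x ∈ E and every t ≥ 0 the function s ↦ χ(φ(x,s)) is Lebesgue integrable on [0,t] and w(φ(x,t)) − w(x) = ∫₀ᵗ χ(φ(x,s)) ds. -/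

import Mathlib

open MeasureTheory

/-!
Along a trajectory, `t ↦ w (φ x t)` is an indefinite integral of `g`, so by Lebesgue's
differentiation theorem its derivative at almost every time `s` is `g s`. By the semigroup property
this derivative is the limit of the difference quotients of `w` at the *point* `φ x s`, which does
not depend on the trajectory. Taking that limit along a sequence of times makes it measurable.
-/

open Set Filter Topology

lemma tendsto_add_one_div_nat_add_one_nhdsGT (a : ℝ) :
    Tendsto (fun n : ℕ => a + 1 / ((n : ℝ) + 1)) atTop (𝓝[>] a) := by
  refine tendsto_nhdsWithin_iff.2
    ⟨?_, Eventually.of_forall fun n => lt_add_of_pos_right a Nat.one_div_pos_of_nat⟩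
  simpa only [add_zero] using tendsto_one_div_add_atTop_nhds_zero_nat.const_add a

section

variable {E F : Type*} [NormedAddCommGroup F] [NormedSpace ℝ F]

/-- The derivative at time zero of `w` along the trajectory of `φ` started at `x`. It is the limit
of the forward difference quotients over the time steps `1 / (n + 1)` only, since a countable family
of steps makes the result measurable in `x`; where they diverge the value is junk. -/
noncomputable def derivAlongFlow (φ : E → ℝ → E) (w : E → F) (x : E) : F :=
  limUnder atTop fun n : ℕ => (1 / ((n : ℝ) + 1))⁻¹ • (w (φ x (1 / ((n : ℝ) + 1))) - w x)

theorem derivAlongFlow_eq_of_hasDerivWithinAt {φ : E → ℝ → E} {w : E → F} {x : E} {s : ℝ} {d : F}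
    (hφ : ∀ t, 0 < t → φ (φ x s) t = φ x (t + s))
    (hd : HasDerivWithinAt (fun t => w (φ x t)) d (Ioi s) s) :
    derivAlongFlow φ w (φ x s) = d := by
  have hslope := ((hasDerivWithinAt_iff_tendsto_slope' self_notMem_Ioi).1 hd).comp
    (tendsto_add_one_div_nat_add_one_nhdsGT s)
  refine (hslope.congr fun n => ?_).limUnder_eq
  rw [hφ _ Nat.one_div_pos_of_nat, add_comm _ s]
  simp only [Function.comp_apply, slope, add_sub_cancel_left, vsub_eq_sub]

variable [CompleteSpace F]

theorem stronglyMeasurable_derivAlongFlow [MeasurableSpace E] {φ : E → ℝ → E} {w : E → F}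
    (hφ : ∀ t, 0 < t → Measurable fun x => φ x t) (hw : StronglyMeasurable w) :
    StronglyMeasurable (derivAlongFlow φ w) :=
  StronglyMeasurable.limUnder fun _ =>
    ((hw.comp_measurable (hφ _ Nat.one_div_pos_of_nat)).sub hw).const_smul _

theorem ae_hasDerivAt_of_sub_eq_setIntegral {f g : ℝ → F} {a b : ℝ} {c : F}
    (hg : IntegrableOn g (Icc a b)) (hf : ∀ t ∈ Icc a b, f t - c = ∫ s in Icc a t, g s) :
    ∀ᵐ s ∂volume.restrict (Icc a b), HasDerivAt f (g s) s := by
  rcases lt_or_ge b a with hab | hab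
  · simp only [Icc_eq_empty_of_lt hab, Measure.restrict_empty, ae_zero, eventually_bot]
  have hgi : IntervalIntegrable g volume a b :=
    (intervalIntegrable_iff_integrableOn_Icc_of_le hab).2 hg
  have hf' : ∀ t ∈ Icc a b, f t = (∫ s in a..t, g s) + c := fun t ht => by
    rw [intervalIntegral.integral_of_le ht.1, ← integral_Icc_eq_integral_Ioc, ← hf t ht,
      sub_add_cancel]
  rw [← Measure.restrict_congr_set Ioo_ae_eq_Icc, ae_restrict_iff' measurableSet_Ioo]
  filter_upwards [hgi.ae_hasDerivAt_integral] with s hderiv hs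
  rw [uIcc_of_le hab] at hderiv
  have hprimitive := (hderiv (Ioo_subset_Icc_self hs) a (left_mem_Icc.2 hab)).add_const c
  exact hprimitive.congr_of_eventuallyEq (eventually_of_mem (Icc_mem_nhds hs.1 hs.2) hf')

theorem ae_eq_derivAlongFlow_of_sub_eq_setIntegral {φ : E → ℝ → E} {w : E → F} {x : E} {c : F}
    {g : ℝ → F} {T : ℝ} (hφ : ∀ s t, 0 ≤ s → 0 ≤ t → φ (φ x s) t = φ x (t + s))
    (hg : IntegrableOn g (Icc 0 T))
    (hw : ∀ t ∈ Icc 0 T, w (φ x t) - c = ∫ s in Icc 0 t, g s) :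
    g =ᵐ[volume.restrict (Icc 0 T)] fun s => derivAlongFlow φ w (φ x s) := by
  filter_upwards [ae_hasDerivAt_of_sub_eq_setIntegral hg hw, ae_restrict_mem measurableSet_Icc]
    with s hderiv hs
  exact (derivAlongFlow_eq_of_hasDerivWithinAt (fun t ht => hφ s t hs.1 ht.le)
    hderiv.hasDerivWithinAt).symm

theorem exists_measurable_chi_of_absolutelyContinuous_along_flow_general
    [MeasurableSpace E] (φ : E → ℝ → E) (w : E → F)
    (hφsemi : ∀ x, ∀ s t : ℝ, 0 ≤ s → 0 ≤ t → φ (φ x s) t = φ x (t + s))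
    (hφmeas : ∀ t : ℝ, 0 < t → Measurable (fun x => φ x t))
    (hw : StronglyMeasurable w)
    (hAC : ∀ x : E, ∃ g : ℝ → F,
      (∀ T : ℝ, 0 ≤ T → IntegrableOn g (Icc 0 T) volume) ∧
      ∀ t : ℝ, 0 ≤ t → w (φ x t) - w x = ∫ s in Icc 0 t, g s) :
    ∃ χ : E → F, StronglyMeasurable χ ∧ ∀ x : E, ∀ t : ℝ, 0 ≤ t →
      IntegrableOn (fun s => χ (φ x s)) (Icc 0 t) volume ∧
      w (φ x t) - w x = ∫ s in Icc 0 t, χ (φ x s) := by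
  refine ⟨derivAlongFlow φ w, stronglyMeasurable_derivAlongFlow hφmeas hw, fun x t ht => ?_⟩
  obtain ⟨g, hg, hgw⟩ := hAC x
  have hgχ : g =ᵐ[volume.restrict (Icc 0 t)] fun s => derivAlongFlow φ w (φ x s) :=
    ae_eq_derivAlongFlow_of_sub_eq_setIntegral (hφsemi x) (hg t ht) fun s hs => hgw s hs.1
  exact ⟨(hg t ht).congr hgχ, (hgw t ht).trans (integral_congr_ae hgχ)⟩

end

/-- Paper's Lemma A.2(b): if moreover `E` is a measurable space, `w` is measurable
and the flow maps `φ(·,t)` are measurable, then the "derivative along the flow"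
function `χ` can be chosen measurable. -/
theorem exists_measurable_chi_of_absolutelyContinuous_along_flow
    {E : Type*} [MeasurableSpace E] (φ : E → ℝ → E) (w : E → ℝ)
    (hφ0 : ∀ x, φ x 0 = x)
    (hφsemi : ∀ x, ∀ s t : ℝ, 0 ≤ s → 0 ≤ t → φ (φ x s) t = φ x (t + s))
    (hφmeas : ∀ t : ℝ, 0 ≤ t → Measurable (fun x => φ x t))
    (hw : Measurable w)
    (hAC : ∀ x : E, ∃ g : ℝ → ℝ,
      (∀ T : ℝ, 0 ≤ T → IntegrableOn g (Set.Icc 0 T) volume) ∧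
      ∀ t : ℝ, 0 ≤ t → w (φ x t) - w x = ∫ s in Set.Icc 0 t, g s) :
    ∃ χ : E → ℝ, Measurable χ ∧ ∀ x : E, ∀ t : ℝ, 0 ≤ t →
      IntegrableOn (fun s => χ (φ x s)) (Set.Icc 0 t) volume ∧
      w (φ x t) - w x = ∫ s in Set.Icc 0 t, χ (φ x s) := by
  obtain ⟨χ, hχ, hχw⟩ := exists_measurable_chi_of_absolutelyContinuous_along_flow_general φ w
    hφsemi (fun t ht => hφmeas t ht.le) hw.stronglyMeasurable hAC
  exact ⟨χ, hχ.measurable, hχw⟩
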